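/- Let N = (P,T,F,Var) be a UDPN and i, f ℚ⁺-markings. If there exists a ℚ⁺-run σ such that i →σ_{ℚ⁺} f and |dval(σ)| > |dval(i) ∪ dval(f)| + 1 + maxvars(N), then there exists a ℚ⁺-run ρ such that i →ρ_{ℚ⁺} f and |dval(ρ)| ≤ |dval(σ)| − 1. -/

import Mathlib

open Finset

noncomputable section
open scoped Classical

/-- An unordered data Petri net over places `P`, transitions `T`, variables `V`,
with countably infinite data domain `D = ℕ`.
`pre p t` is the function `F(p,t) : V → ℕ` and `post t p` is `F(t,p) : V → ℕ`. -/
structure UDPN (P T V : Type) where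
  pre : P → T → V → ℕ
  post : T → P → V → ℕ

/-- An X-step `(c, t, π)`: coefficient, transition and mode. -/
structure Step (T V : Type) where
  c : ℚ
  t : T
  π : V → ℕ

variable {P T V : Type} [Fintype P] [Fintype T] [Fintype V]

/-- The `P × V` rational matrix `F(•,t)`. -/
def preMat (N : UDPN P T V) (t : T) (p : P) (x : V) : ℚ := (N.pre p t x : ℚ)

/-- The displacement `Δ(t) = F(t,•) − F(•,t)` as a `P × V` rational matrix. -/
def delta (N : UDPN P T V) (t : T) (p : P) (x : V) : ℚ :=
  (N.post t p x : ℚ) - (N.pre p t x : ℚ)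

/-- `A ∘ π⁻¹`: the `P × ℕ` matrix with `(A∘π⁻¹)(p,α) = A(p,x)` if `α = π x`,
and `0` if `α` is outside the range of `π`. (For injective `π` the sum has at
most one nonzero summand.) -/
def compInv (A : P → V → ℚ) (π : V → ℕ) (p : P) (α : ℕ) : ℚ :=
  ∑ x : V, if π x = α then A p x else 0

/-- Only finitely many nonzero columns. -/
def FinCols (m : P → ℕ → ℚ) : Prop := {α : ℕ | ∃ p, m p α ≠ 0}.Finite

/-- `IsMarking pos m`: `m` is an X-marking; `pos = true` corresponds to `X = ℚ⁺`
(all entries nonnegative), `pos = false` to `X = ℚ`. -/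
def IsMarking (pos : Bool) (m : P → ℕ → ℚ) : Prop :=
  FinCols m ∧ (pos = true → ∀ p α, 0 ≤ m p α)

/-- Data values of a marking. -/
def dvalM (m : P → ℕ → ℚ) : Set ℕ := {α | ∃ p, m p α ≠ 0}

/-- A valid X-step: nonnegative coefficient and injective mode.  -/
def IsStep (s : Step T V) : Prop := 0 ≤ s.c ∧ Function.Injective s.π

/-- A valid X-run: a finite sequence of X-steps. -/
def IsRun (ρ : List (Step T V)) : Prop := ∀ s ∈ ρ, IsStep s

/-- The effect `c · (Δ(t) ∘ π⁻¹)` of a step. -/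
def stepEffect (N : UDPN P T V) (s : Step T V) (p : P) (α : ℕ) : ℚ :=
  s.c * compInv (delta N s.t) s.π p α

/-- The effect `Δ(ρ)` of a run. -/
def runEffect (N : UDPN P T V) (ρ : List (Step T V)) (p : P) (α : ℕ) : ℚ :=
  (ρ.map fun s => stepEffect N s p α).sum

/-- A step `(c,t,π)` is fireable at `m` if `m − c·(F(•,t)∘π⁻¹)` is again an
X-marking: finitely many nonzero columns and (when `pos`) nonnegative entries. -/
def stepFireable (pos : Bool) (N : UDPN P T V) (m : P → ℕ → ℚ) (s : Step T V) : Prop :=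
  FinCols (fun p α => m p α - s.c * compInv (preMat N s.t) s.π p α) ∧
  (pos = true → ∀ p α, 0 ≤ m p α - s.c * compInv (preMat N s.t) s.π p α)

/-- A run is fireable at `m` if each step is fireable at the corresponding
intermediate marking. -/
def runFireable (pos : Bool) (N : UDPN P T V) : (P → ℕ → ℚ) → List (Step T V) → Prop
  | _, [] => True
  | m, s :: ρ => stepFireable pos N m s ∧
      runFireable pos N (fun p α => m p α + stepEffect N s p α) ρ

/-- `m →ρ_X m'` : `ρ` is fireable at `m` and `m' = m + Δ(ρ)`. -/
def Reaches (pos : Bool) (N : UDPN P T V) (i : P → ℕ → ℚ) (ρ : List (Step T V))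
    (f : P → ℕ → ℚ) : Prop :=
  runFireable pos N i ρ ∧ f = fun p α => i p α + runEffect N ρ p α

/-- `f` is X-reachable from `i`. -/
def Reach (pos : Bool) (N : UDPN P T V) (i f : P → ℕ → ℚ) : Prop :=
  ∃ ρ, IsRun ρ ∧ Reaches pos N i ρ f

/-- `vars(t)`. -/
def varsOf (N : UDPN P T V) (t : T) : Set V :=
  {x | ∃ p, N.pre p t x ≠ 0 ∨ N.post t p x ≠ 0}

/-- `maxvars(N) = max_{t ∈ T} |vars(t)|` (0 if `T` is empty). -/
def maxvars (N : UDPN P T V) : ℕ :=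
  Finset.univ.sup fun t : T => (varsOf N t).ncard

/-- `dval(ρ)`: the data values used by a run. -/
def runDval (N : UDPN P T V) (ρ : List (Step T V)) : Set ℕ :=
  {α | ∃ s ∈ ρ, ∃ x ∈ varsOf N s.t, s.π x = α}
/-- For `α ∈ E`: the least element of `{β ∈ E | β > α}` if nonempty, else `min E`. -/
def nextE (E : Finset ℕ) (α : ℕ) : ℕ :=
  if h : (E.filter fun β => α < β).Nonempty then (E.filter fun β => α < β).min' h
  else if h' : E.Nonempty then E.min' h' else 0

/-- The inverse of `nextE` on `E`: the greatest element of `{γ ∈ E | γ < β}` if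
nonempty, else `max E`. -/
def prevE (E : Finset ℕ) (β : ℕ) : ℕ :=
  if h : (E.filter fun γ => γ < β).Nonempty then (E.filter fun γ => γ < β).max' h
  else if h' : E.Nonempty then E.max' h' else 0

/-- The mode `π'` of `rot(E,ω)`, characterized by: the permutation matrix `P'` of
`π'` satisfies `P'(•,α) = P(•,α)` for `α ∉ E` and `P'(•,α) = P(•, nextE α)` for
`α ∈ E` (i.e. `π' x = α ↔ π x = nextE α` for `α ∈ E`). -/
def rotMode {V : Type} (E : Finset ℕ) (π : V → ℕ) (x : V) : ℕ :=
  if π x ∈ E then prevE E (π x) else π x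

/-- `rot(E,ω)`. -/
def rotStep (E : Finset ℕ) (s : Step T V) : Step T V := ⟨s.c, s.t, rotMode E s.π⟩

/-- The uniformization `U(E,ω)`: the concatenation
`rot^0(E, ω/|E|) ⋯ rot^{|E|−1}(E, ω/|E|)`. -/
def uniformize (E : Finset ℕ) (s : Step T V) : List (Step T V) :=
  (List.range E.card).map fun k => (rotStep E)^[k] ⟨s.c / (E.card : ℚ), s.t, s.π⟩

/-- Column `α` of `Δ(t)·P_π` is zero. -/
def zeroCol (N : UDPN P T V) (s : Step T V) (α : ℕ) : Prop :=
  ∀ p, compInv (delta N s.t) s.π p α = 0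

/-- The transposition of the data values `α` and `β`. -/
def swapVal (α β γ : ℕ) : ℕ := if γ = α then β else if γ = β then α else γ

/-- `R(α,E,ω)`: if column `α` of `Δ(t)·P_π` is zero then `ω` itself; otherwise the
step whose permutation matrix is obtained from `P_π` by exchanging columns `α` and
`β`, where `β` is the least datum in `E` whose column of `Δ(t)·P_π` is zero. -/
def replaceStep (N : UDPN P T V) (α : ℕ) (E : Finset ℕ) (s : Step T V) : Step T V :=
  if zeroCol N s α then s
  else if h : (E.filter fun β => zeroCol N s β).Nonempty then
    ⟨s.c, s.t, fun x => swapVal α ((E.filter fun β => zeroCol N s β).min' h) (s.π x)⟩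
  else s

/-- `dec(E,α,σ)`: the concatenation `U(E,R(α,E,σ(1))) ⋯ U(E,R(α,E,σ(n)))`. -/
def decRun (N : UDPN P T V) (α : ℕ) (E : Finset ℕ) (σ : List (Step T V)) :
    List (Step T V) :=
  σ.flatMap fun s => uniformize E (replaceStep N α E s)

/-- A histogram of order `q`: a `V × ℕ` matrix with nonnegative rational entries
and finitely many nonzero columns, every row summing to `q` and every column
summing to at most `q`. -/
def IsHistogram (H : V → ℕ → ℚ) (q : ℚ) : Prop :=
  0 ≤ q ∧ (∀ x α, 0 ≤ H x α) ∧ ({α | ∃ x, H x α ≠ 0}).Finite ∧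
  (∀ x, ∑ᶠ α, H x α = q) ∧ (∀ α, ∑ x : V, H x α ≤ q)

/-- `col(H)`: the nonzero columns of `H`. -/
def colH (H : V → ℕ → ℚ) : Set ℕ := {α | ∃ x, H x α ≠ 0}

/-- The permutation matrix `P_π` of a mode `π`. -/
def permMat {V : Type} (π : V → ℕ) (x : V) (α : ℕ) : ℚ := if π x = α then 1 else 0

/-- `Pre(ρ)`: pairs `(p,α)` of tokens consumed by the run `ρ`. -/
def preSet (N : UDPN P T V) (ρ : List (Step T V)) : Set (P × ℕ) :=
  {pa | ∃ s ∈ ρ, ∃ x, 0 < N.pre pa.1 s.t x ∧ s.π x = pa.2}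

/-- `Post(ρ)`: pairs `(p,α)` of tokens produced by the run `ρ`. -/
def postSet (N : UDPN P T V) (ρ : List (Step T V)) : Set (P × ℕ) :=
  {pa | ∃ s ∈ ρ, ∃ x, 0 < N.post s.t pa.1 x ∧ s.π x = pa.2}

/-- A loop-less UDPN: `PrePlace(t) ∩ PostPlace(t) = ∅` for every transition. -/
def IsLoopless (N : UDPN P T V) : Prop :=
  ∀ t : T, ¬ ∃ p : P, (∃ x, 0 < N.pre p t x) ∧ (∃ x, 0 < N.post t p x)

/-!
Let `K = dval(i) ∪ dval(f)`. Pick a datum `α ∈ dval(σ) \ K` and let `E` be the set of the remaining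
elements of `dval(σ) \ K`. *Collapsing* a marking empties column `α` and replaces every column in
`E` by the same column, `1 / |E|` times the sum of the columns in `E ∪ {α}`. This operation is
linear and positive, and it fixes `i` and `f`, whose columns in `E ∪ {α}` are zero.

Since `E` has at least as many elements as any step of `σ` has data values, the data of such a step
can be permuted within `E ∪ {α}` so that `α` is avoided. Rotating the resulting step along a cycle
on `E`, each time with `1 / |E|` of its coefficient, produces a run whose total consumption and
effect are the collapses of those of the step. Positivity makes this run fireable at the collapsed
marking, so replacing every step of `σ` in this way gives a run from `i` to `f` that avoids `α`.
-/

section Collapse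

variable {D K : Type*}

lemma sum_range_card_pow_apply {M : Type*} [AddCommMonoid M] {E : Finset D}
    {g : Equiv.Perm D} (hg : g.IsCycleOn (E : Set D)) {γ : D} (hγ : γ ∈ E) (u : D → M) :
    ∑ k ∈ Finset.range E.card, u ((g ^ k) γ) = ∑ e ∈ E, u e := by
  refine Finset.sum_nbij (fun k => (g ^ k) γ) (fun k _ => (hg.1.perm_pow k).mapsTo hγ) ?_ ?_
    fun _ _ => rfl
  · intro k hk l hl hkl
    exact ((hg.pow_apply_eq_pow_apply hγ).1 hkl).eq_of_lt_of_lt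
      (Finset.mem_range.1 hk) (Finset.mem_range.1 hl)
  · intro e he
    obtain ⟨k, hk, hke⟩ := hg.exists_pow_eq hγ he
    exact ⟨k, Finset.mem_coe.2 (Finset.mem_range.2 hk), hke⟩

lemma exists_perm_apply_notMem {E : Finset D} {α : D} (hα : α ∉ E) {W : Set D}
    (hWfin : W.Finite) (hW : W.ncard ≤ E.card) :
    ∃ τ : Equiv.Perm D, {v | τ v ≠ v} ⊆ insert α (E : Set D) ∧ τ α ∉ W := by
  by_cases hαW : α ∈ W
  · have hlt : (W \ {α}).ncard < (E : Set D).ncard := by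
      rw [Set.ncard_coe_finset]
      exact (Set.ncard_sdiff_singleton_lt_of_mem hαW hWfin).trans_le hW
    obtain ⟨β, hβE, hβ⟩ := Set.exists_mem_notMem_of_ncard_lt_ncard hlt hWfin.sdiff
    refine ⟨Equiv.swap α β, fun v hv => ?_, ?_⟩
    · rcases (Equiv.swap_apply_ne_self_iff.1 hv).2 with rfl | rfl
      · exact Set.mem_insert _ _
      · exact Set.mem_insert_of_mem _ hβE
    · rw [Equiv.swap_apply_left]
      exact fun hβW => hβ ⟨hβW, fun h => hα (h ▸ hβE)⟩
  · exact ⟨1, fun v hv => absurd rfl hv, hαW⟩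

variable [DecidableEq D]

/-- The linear operator on families of columns indexed by `D` (read row by row) that empties column
`α` and replaces each column in `E` by `1 / |E|` times the sum of the columns in `E ∪ {α}`. It
preserves the total when `α ∉ E` and `E` is nonempty. -/
def collapseCols (K : Type*) [Field K] (E : Finset D) (α : D) : (D → K) →ₗ[K] (D → K) where
  toFun u γ :=
    if γ = α then 0 else if γ ∈ E then (∑ e ∈ insert α E, u e) / (E.card : K) else u γ
  map_add' u v := by
    funext γ
    simp only [Pi.add_apply]
    split_ifs
    · rw [add_zero]
    · rw [Finset.sum_add_distrib, add_div]
    · rfl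
  map_smul' c u := by
    funext γ
    simp only [Pi.smul_apply, smul_eq_mul, RingHom.id_apply]
    split_ifs
    · rw [mul_zero]
    · rw [← Finset.mul_sum, mul_div_assoc]
    · rfl

lemma collapseCols_apply [Field K] (E : Finset D) (α : D) (u : D → K) (γ : D) :
    collapseCols K E α u γ =
      if γ = α then 0 else if γ ∈ E then (∑ e ∈ insert α E, u e) / (E.card : K) else u γ :=
  rfl

lemma collapseCols_nonneg [Field K] [LinearOrder K] [IsStrictOrderedRing K] (E : Finset D) (α : D)
    {u : D → K} (hu : ∀ γ, 0 ≤ u γ) (γ : D) : 0 ≤ collapseCols K E α u γ := by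
  rw [collapseCols_apply]
  split_ifs
  · exact le_rfl
  · exact div_nonneg (Finset.sum_nonneg fun e _ => hu e) (Nat.cast_nonneg _)
  · exact hu γ

lemma collapseCols_eq_self [Field K] {E : Finset D} {α : D} {u : D → K}
    (hu : ∀ e ∈ insert α E, u e = 0) : collapseCols K E α u = u := by
  funext γ
  rw [collapseCols_apply]
  split_ifs with hα hE
  · exact hα ▸ (hu α (Finset.mem_insert_self α E)).symm
  · rw [Finset.sum_eq_zero hu, zero_div, hu γ (Finset.mem_insert_of_mem hE)]
  · rfl

lemma sum_perm_pow_div_card_eq_collapseCols [Field K] [CharZero K] {E : Finset D}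
    (hE : E.Nonempty) {α : D} (hα : α ∉ E) {τ g : Equiv.Perm D}
    (hτ : {v | τ v ≠ v} ⊆ insert α (E : Set D)) (hg : g.IsCycleOn (E : Set D))
    (hgE : {v | g v ≠ v} ⊆ (E : Set D)) {u : D → K} (hu : u (τ α) = 0) (γ : D) :
    (∑ k ∈ Finset.range E.card, u (τ ((g ^ k) γ))) / (E.card : K) = collapseCols K E α u γ := by
  have hcard : (E.card : K) ≠ 0 := Nat.cast_ne_zero.2 hE.card_ne_zero
  by_cases hγE : γ ∈ E
  · have hγα : γ ≠ α := ne_of_mem_of_not_mem hγE hα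
    rw [collapseCols_apply, if_neg hγα, if_pos hγE,
      sum_range_card_pow_apply hg hγE fun v => u (τ v),
      ← Equiv.Perm.sum_comp τ (insert α E) u (by rwa [Finset.coe_insert]),
      Finset.sum_insert hα, hu, zero_add]
  · have hfix (k : ℕ) : (g ^ k) γ = γ :=
      Equiv.Perm.pow_apply_eq_self_of_apply_eq_self (not_not.1 fun h => hγE (hgE h)) k
    simp only [hfix, Finset.sum_const, Finset.card_range, nsmul_eq_mul]
    rw [mul_div_cancel_left₀ _ hcard, collapseCols_apply, if_neg hγE]
    split_ifs with hγα
    · rw [hγα, hu]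
    · rw [not_not.1 fun h => (hτ h).elim hγα hγE]

lemma exists_perms_sum_div_card_eq_collapseCols (K : Type*) [Field K] [CharZero K] {E : Finset D}
    (hE : E.Nonempty) {α : D} (hα : α ∉ E) {W : Set D} (hWfin : W.Finite)
    (hW : W.ncard ≤ E.card) :
    ∃ κ : ℕ → Equiv.Perm D,
      (∀ k, {v | κ k v ≠ v} ⊆ insert α (E : Set D)) ∧ (∀ k, κ k α ∉ W) ∧
      ∀ u : D → K, Function.support u ⊆ W → ∀ γ,
        (∑ k ∈ Finset.range E.card, u (κ k γ)) / (E.card : K) = collapseCols K E α u γ := by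
  obtain ⟨τ, hτ, hτW⟩ := exists_perm_apply_notMem hα hWfin hW
  obtain ⟨g, hg, hgE⟩ := E.countable_toSet.exists_cycleOn
  have hgfix (k : ℕ) {v : D} (hv : v ∉ E) : (g ^ k) v = v :=
    Equiv.Perm.pow_apply_eq_self_of_apply_eq_self (not_not.1 fun h => hv (hgE h)) k
  refine ⟨fun k => τ * g ^ k, fun k v hv => ?_, fun k => ?_, fun u hu γ => ?_⟩
  · by_contra hvE
    rw [Set.mem_insert_iff, not_or] at hvE
    refine hv ?_
    rw [Equiv.Perm.mul_apply, hgfix k hvE.2]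
    exact not_not.1 fun h => (hτ h).elim hvE.1 hvE.2
  · rwa [Equiv.Perm.mul_apply, hgfix k hα]
  · exact sum_perm_pow_div_card_eq_collapseCols hE hα hτ hg hgE
      (Function.notMem_support.1 fun h => hτW (hu h)) γ

end Collapse

section Columns

variable {Place Var : Type}

lemma FinCols.add {m m' : Place → ℕ → ℚ} (hm : FinCols m) (hm' : FinCols m') :
    FinCols (fun p γ => m p γ + m' p γ) := by
  refine (Set.Finite.union hm hm').subset ?_
  rintro γ ⟨p, hp⟩
  by_cases h0 : m p γ = 0
  · exact Or.inr ⟨p, fun h1 => hp (by simp only [h0, h1, add_zero])⟩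
  · exact Or.inl ⟨p, h0⟩

lemma FinCols.const_mul {m : Place → ℕ → ℚ} (hm : FinCols m) (c : ℚ) :
    FinCols (fun p γ => c * m p γ) :=
  hm.subset fun _ ⟨p, hp⟩ => ⟨p, right_ne_zero_of_mul hp⟩

lemma FinCols.sub {m m' : Place → ℕ → ℚ} (hm : FinCols m) (hm' : FinCols m') :
    FinCols (fun p γ => m p γ - m' p γ) := by
  simpa only [neg_one_mul, ← sub_eq_add_neg] using hm.add (hm'.const_mul (-1))

lemma FinCols.collapseCols {m : Place → ℕ → ℚ} (hm : FinCols m) (E : Finset ℕ) (α : ℕ) :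
    FinCols (collapseCols ℚ E α ∘ m) := by
  refine (E.finite_toSet.union hm).subset ?_
  rintro γ ⟨p, hp⟩
  by_cases hE : γ ∈ E
  · exact Or.inl hE
  · refine Or.inr ⟨p, fun h0 => hp ?_⟩
    rw [Function.comp_apply, collapseCols_apply, if_neg hE, h0, ite_self]

lemma collapseCols_comp_eq_self {E : Finset ℕ} {α : ℕ} {m : Place → ℕ → ℚ}
    (h : ∀ e ∈ insert α E, e ∉ dvalM m) : collapseCols ℚ E α ∘ m = m :=
  funext fun p => collapseCols_eq_self fun e he => not_not.1 fun hne => h e he ⟨p, hne⟩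

variable [Fintype Var]

lemma compInv_nonneg {A : Place → Var → ℚ} (hA : ∀ p x, 0 ≤ A p x) (π : Var → ℕ) (p : Place)
    (γ : ℕ) : 0 ≤ compInv A π p γ := by
  refine Finset.sum_nonneg fun x _ => ?_
  split_ifs
  exacts [hA p x, le_rfl]

lemma compInv_symm_comp (A : Place → Var → ℚ) (κ : Equiv.Perm ℕ) (π : Var → ℕ) (p : Place)
    (γ : ℕ) : compInv A (κ.symm ∘ π) p γ = compInv A π p (κ γ) := by
  simp only [compInv, Function.comp_apply, Equiv.symm_apply_eq]

lemma support_compInv_subset (A : Place → Var → ℚ) (π : Var → ℕ) (p : Place) :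
    Function.support (compInv A π p) ⊆ π '' Function.support (A p) := by
  intro γ hγ
  obtain ⟨x, -, hx⟩ := Finset.exists_ne_zero_of_sum_ne_zero hγ
  rw [ite_ne_right_iff] at hx
  exact ⟨x, hx.2, hx.1⟩

lemma finCols_compInv (A : Place → Var → ℚ) (π : Var → ℕ) : FinCols (compInv A π) :=
  (Set.finite_range π).subset fun _ ⟨p, hp⟩ =>
    Set.image_subset_range _ _ (support_compInv_subset A π p hp)

end Columns

section Runs

variable {Place Trans Var : Type}

lemma isRun_cons_iff {s : Step Trans Var} {σ : List (Step Trans Var)} :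
    IsRun (s :: σ) ↔ IsStep s ∧ IsRun σ :=
  List.forall_mem_cons

lemma IsRun.append {ρ ρ' : List (Step Trans Var)} (hρ : IsRun ρ) (hρ' : IsRun ρ') :
    IsRun (ρ ++ ρ') :=
  List.forall_mem_append.2 ⟨hρ, hρ'⟩

lemma runDval_append (N : UDPN Place Trans Var) (ρ ρ' : List (Step Trans Var)) :
    runDval N (ρ ++ ρ') = runDval N ρ ∪ runDval N ρ' := by
  ext γ
  simp only [runDval, List.mem_append, or_and_right, exists_or, Set.mem_union, Set.mem_ofPred_eq]

lemma support_preMat_subset (N : UDPN Place Trans Var) (t : Trans) (p : Place) :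
    Function.support (preMat N t p) ⊆ varsOf N t :=
  fun _ hx => ⟨p, Or.inl (Nat.cast_ne_zero.1 hx)⟩

lemma support_delta_subset (N : UDPN Place Trans Var) (t : Trans) (p : Place) :
    Function.support (delta N t p) ⊆ varsOf N t := by
  intro x hx
  refine ⟨p, ?_⟩
  by_contra! h0
  exact hx (by rw [delta, h0.1, h0.2, sub_self])

lemma ncard_varsOf_le_maxvars [Fintype Trans] (N : UDPN Place Trans Var) (t : Trans) :
    (varsOf N t).ncard ≤ maxvars N :=
  Finset.le_sup (f := fun t => (varsOf N t).ncard) (Finset.mem_univ t)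

lemma runDval_finite [Finite Var] (N : UDPN Place Trans Var) (σ : List (Step Trans Var)) :
    (runDval N σ).Finite := by
  refine (σ.finite_toSet.biUnion fun s _ => Set.finite_range s.π).subset ?_
  rintro γ ⟨s, hs, x, -, rfl⟩
  exact Set.mem_biUnion hs ⟨x, rfl⟩

variable [Fintype Var]

/-- The sum of the matrices `c · (A(t) ∘ π⁻¹)` over the steps `(c, t, π)` of `ρ`. For `A = Δ` this
is definitionally the effect `Δ(ρ)`; for `A(t) = F(•,t)` it is the total consumption of `ρ`. -/
def runTotal (A : Trans → Place → Var → ℚ) (ρ : List (Step Trans Var)) (p : Place) (γ : ℕ) : ℚ :=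
  (ρ.map fun s => s.c * compInv (A s.t) s.π p γ).sum

lemma runTotal_cons (A : Trans → Place → Var → ℚ) (s : Step Trans Var)
    (ρ : List (Step Trans Var)) (p : Place) (γ : ℕ) :
    runTotal A (s :: ρ) p γ = s.c * compInv (A s.t) s.π p γ + runTotal A ρ p γ :=
  List.sum_cons

lemma runTotal_nonneg {A : Trans → Place → Var → ℚ} (hA : ∀ t p x, 0 ≤ A t p x)
    {ρ : List (Step Trans Var)} (hρ : IsRun ρ) (p : Place) (γ : ℕ) : 0 ≤ runTotal A ρ p γ := by
  refine List.sum_nonneg fun q hq => ?_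
  obtain ⟨s, hs, rfl⟩ := List.mem_map.1 hq
  exact mul_nonneg (hρ s hs).1 (compInv_nonneg (hA s.t) _ _ _)

lemma finCols_stepEffect (N : UDPN Place Trans Var) (s : Step Trans Var) :
    FinCols (stepEffect N s) :=
  (finCols_compInv _ _).const_mul _

lemma finCols_runEffect (N : UDPN Place Trans Var) (ρ : List (Step Trans Var)) :
    FinCols (runEffect N ρ) := by
  induction ρ with
  | nil => simp [FinCols, runEffect]
  | cons s ρ ih => exact (finCols_stepEffect N s).add ih

lemma neg_consumption_le_stepEffect (N : UDPN Place Trans Var) {s : Step Trans Var}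
    (hs : 0 ≤ s.c) (p : Place) (γ : ℕ) :
    -(s.c * compInv (preMat N s.t) s.π p γ) ≤ stepEffect N s p γ := by
  rw [← mul_neg, compInv, ← Finset.sum_neg_distrib]
  refine mul_le_mul_of_nonneg_left (Finset.sum_le_sum fun x _ => ?_) hs
  split_ifs
  · simp [preMat, delta]
  · exact neg_zero.le

lemma runFireable_of_runTotal_preMat_le {pos : Bool} (N : UDPN Place Trans Var)
    {ρ : List (Step Trans Var)} {m : Place → ℕ → ℚ} (hm : FinCols m) (hρ : IsRun ρ)
    (hle : pos = true → ∀ p γ, runTotal (preMat N) ρ p γ ≤ m p γ) : runFireable pos N m ρ := by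
  induction ρ generalizing m with
  | nil => trivial
  | cons s ρ ih =>
    obtain ⟨hs, hρ⟩ := isRun_cons_iff.1 hρ
    simp only [runTotal_cons] at hle
    refine ⟨⟨hm.sub ((finCols_compInv _ _).const_mul _), fun hpos p γ => ?_⟩,
      ih (hm.add (finCols_stepEffect N s)) hρ fun hpos p γ => ?_⟩
    · have hrest : 0 ≤ runTotal (preMat N) ρ p γ :=
        runTotal_nonneg (fun _ _ _ => Nat.cast_nonneg _) hρ p γ
      linarith [hle hpos p γ]
    · linarith [hle hpos p γ, neg_consumption_le_stepEffect N hs.1 p γ]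

lemma reaches_nil_iff {pos : Bool} {N : UDPN Place Trans Var} {m m' : Place → ℕ → ℚ} :
    Reaches pos N m [] m' ↔ m' = m := by
  simp [Reaches, runFireable, runEffect]

lemma reaches_cons_iff {pos : Bool} {N : UDPN Place Trans Var} {s : Step Trans Var}
    {σ : List (Step Trans Var)} {m m' : Place → ℕ → ℚ} :
    Reaches pos N m (s :: σ) m' ↔
      stepFireable pos N m s ∧ Reaches pos N (fun p γ => m p γ + stepEffect N s p γ) σ m' := by
  simp only [Reaches, runFireable, runEffect, List.map_cons, List.sum_cons, add_assoc, and_assoc]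

lemma Reaches.append {pos : Bool} {N : UDPN Place Trans Var} {ρ ρ' : List (Step Trans Var)}
    {m m' m'' : Place → ℕ → ℚ} (h : Reaches pos N m ρ m') (h' : Reaches pos N m' ρ' m'') :
    Reaches pos N m (ρ ++ ρ') m'' := by
  induction ρ generalizing m with
  | nil => exact reaches_nil_iff.1 h ▸ h'
  | cons s ρ ih =>
    rw [reaches_cons_iff] at h
    exact reaches_cons_iff.2 ⟨h.1, ih h.2⟩

end Runs

section Spread

variable {Place Trans Var : Type}

/-- The run that splits `s` into `n` equal parts and renames the data of the `k`-th part by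
`(κ k)⁻¹`. The inverse makes column `γ` of the `k`-th part a multiple of column `κ k γ` of `s`. -/
def Step.spread (s : Step Trans Var) (n : ℕ) (κ : ℕ → Equiv.Perm ℕ) : List (Step Trans Var) :=
  (List.range n).map fun k => ⟨s.c / n, s.t, (κ k).symm ∘ s.π⟩

lemma IsStep.isRun_spread {s : Step Trans Var} (hs : IsStep s) (n : ℕ) (κ : ℕ → Equiv.Perm ℕ) :
    IsRun (s.spread n κ) := by
  intro s' hs'
  obtain ⟨k, -, rfl⟩ := List.mem_map.1 hs'
  exact ⟨div_nonneg hs.1 (Nat.cast_nonneg _), (κ k).symm.injective.comp hs.2⟩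

lemma runDval_spread_subset (N : UDPN Place Trans Var) (s : Step Trans Var) (n : ℕ)
    {κ : ℕ → Equiv.Perm ℕ} {E : Set ℕ} {α : ℕ} (hκ : ∀ k, {v | κ k v ≠ v} ⊆ insert α E)
    (hκα : ∀ k, κ k α ∉ s.π '' varsOf N s.t) :
    runDval N (s.spread n κ) ⊆ (runDval N [s] ∪ E) \ {α} := by
  rintro γ ⟨s', hs', x, hx, hxγ⟩
  obtain ⟨k, -, rfl⟩ := List.mem_map.1 hs'
  replace hxγ : s.π x = κ k γ := (Equiv.symm_apply_eq _).1 hxγ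
  have hγα : γ ≠ α := fun h => hκα k ⟨x, hx, h ▸ hxγ⟩
  refine ⟨?_, hγα⟩
  by_cases hfix : κ k γ = γ
  · exact Or.inl ⟨s, List.mem_singleton_self s, x, hx, hxγ.trans hfix⟩
  · exact Or.inr ((hκ k hfix).resolve_left hγα)

variable [Fintype Var]

lemma runTotal_spread (A : Trans → Place → Var → ℚ) (s : Step Trans Var) (n : ℕ)
    (κ : ℕ → Equiv.Perm ℕ) (p : Place) (γ : ℕ) :
    runTotal A (s.spread n κ) p γ =
      (∑ k ∈ Finset.range n, s.c * compInv (A s.t) s.π p (κ k γ)) / n := by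
  simp only [runTotal, Step.spread, List.map_map, Function.comp_def, Finset.sum_div]
  rw [← List.sum_toFinset _ List.nodup_range, List.toFinset_range]
  refine Finset.sum_congr rfl fun k _ => ?_
  rw [← compInv_symm_comp, div_mul_eq_mul_div]
  rfl

lemma exists_reaches_collapseCols_of_stepFireable {pos : Bool} {N : UDPN Place Trans Var}
    {E : Finset ℕ} (hE : E.Nonempty) {α : ℕ} (hα : α ∉ E) {s : Step Trans Var} (hs : IsStep s)
    (hcard : (varsOf N s.t).ncard ≤ E.card) {m : Place → ℕ → ℚ} (hm : FinCols m)
    (hfire : stepFireable pos N m s) :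
    ∃ ρ : List (Step Trans Var), IsRun ρ ∧ runDval N ρ ⊆ (runDval N [s] ∪ E) \ {α} ∧
      Reaches pos N (collapseCols ℚ E α ∘ m) ρ
        (collapseCols ℚ E α ∘ fun p γ => m p γ + stepEffect N s p γ) := by
  obtain ⟨κ, hκ, hκα, hκsum⟩ := exists_perms_sum_div_card_eq_collapseCols ℚ hE hα
    (W := s.π '' varsOf N s.t) (Set.toFinite _)
    ((Set.ncard_image_le (Set.toFinite _)).trans hcard)
  have htotal {A : Trans → Place → Var → ℚ} (hA : ∀ p, Function.support (A s.t p) ⊆ varsOf N s.t)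
      (p : Place) : runTotal A (s.spread E.card κ) p =
        collapseCols ℚ E α (s.c • compInv (A s.t) s.π p) := by
    funext γ
    rw [runTotal_spread]
    exact hκsum (s.c • compInv (A s.t) s.π p) ((Function.support_const_smul_subset _ _).trans
      ((support_compInv_subset _ _ p).trans (Set.image_mono (hA p)))) γ
  refine ⟨s.spread E.card κ, hs.isRun_spread _ κ, runDval_spread_subset N s _ hκ hκα,
    runFireable_of_runTotal_preMat_le N (hm.collapseCols E α) (hs.isRun_spread _ κ)
      fun hpos p γ => ?_, ?_⟩
  · have hrest := collapseCols_nonneg E α (hfire.2 hpos p) γ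
    change 0 ≤ collapseCols ℚ E α (m p - s.c • compInv (preMat N s.t) s.π p) γ at hrest
    rw [htotal (support_preMat_subset N s.t)]
    rwa [map_sub, Pi.sub_apply, sub_nonneg] at hrest
  · funext p
    change collapseCols ℚ E α (m p + s.c • compInv (delta N s.t) s.π p) =
      collapseCols ℚ E α (m p) + runTotal (delta N) (s.spread E.card κ) p
    rw [map_add, htotal (support_delta_subset N s.t)]

lemma Reaches.exists_reaches_collapseCols {pos : Bool} {N : UDPN Place Trans Var} {E : Finset ℕ}
    (hE : E.Nonempty) {α : ℕ} (hα : α ∉ E) {σ : List (Step Trans Var)} (hσ : IsRun σ)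
    (hcard : ∀ s ∈ σ, (varsOf N s.t).ncard ≤ E.card) {m f : Place → ℕ → ℚ} (hm : FinCols m)
    (hreach : Reaches pos N m σ f) :
    ∃ ρ : List (Step Trans Var), IsRun ρ ∧ runDval N ρ ⊆ (runDval N σ ∪ E) \ {α} ∧
      Reaches pos N (collapseCols ℚ E α ∘ m) ρ (collapseCols ℚ E α ∘ f) := by
  induction σ generalizing m with
  | nil =>
    refine ⟨[], hσ, ?_, ?_⟩
    · rintro γ ⟨s, hs, -⟩
      exact absurd hs List.not_mem_nil
    · rw [reaches_nil_iff.1 hreach, reaches_nil_iff]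
  | cons s σ ih =>
    obtain ⟨hs, hσ⟩ := isRun_cons_iff.1 hσ
    obtain ⟨hs_card, hσ_card⟩ := List.forall_mem_cons.1 hcard
    obtain ⟨hs_fire, hσ_reach⟩ := reaches_cons_iff.1 hreach
    obtain ⟨ρ, hρ, hρdval, hρreach⟩ :=
      exists_reaches_collapseCols_of_stepFireable hE hα hs hs_card hm hs_fire
    obtain ⟨ρ', hρ', hρ'dval, hρ'reach⟩ :=
      ih hσ hσ_card (hm.add (finCols_stepEffect N s)) hσ_reach
    refine ⟨ρ ++ ρ', hρ.append hρ', ?_, hρreach.append hρ'reach⟩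
    rw [runDval_append, ← List.singleton_append, runDval_append, Set.union_union_distrib_right,
      Set.union_sdiff_distrib]
    exact Set.union_subset_union hρdval hρ'dval

theorem qplus_reach_decrease_general {pos : Bool} (N : UDPN Place Trans Var)
    {i f : Place → ℕ → ℚ} (hi : FinCols i) {σ : List (Step Trans Var)} (hσ : IsRun σ)
    (hreach : Reaches pos N i σ f) {k : ℕ} (hk : ∀ s ∈ σ, (varsOf N s.t).ncard ≤ k)
    (hbig : (dvalM i ∪ dvalM f).ncard + k < (runDval N σ).ncard) :
    ∃ ρ : List (Step Trans Var), IsRun ρ ∧ Reaches pos N i ρ f ∧ runDval N ρ ⊂ runDval N σ := by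
  have hf : FinCols f := hreach.2 ▸ hi.add (finCols_runEffect N σ)
  have hfresh_fin : (runDval N σ \ (dvalM i ∪ dvalM f)).Finite := (runDval_finite N σ).sdiff
  have hfresh : k < (runDval N σ \ (dvalM i ∪ dvalM f)).ncard := by
    have := Set.le_ncard_sdiff (dvalM i ∪ dvalM f) (runDval N σ) (hi.union hf)
    omega
  obtain ⟨α, hα⟩ := Set.nonempty_of_ncard_ne_zero (Nat.ne_zero_of_lt hfresh)
  set E : Finset ℕ := hfresh_fin.toFinset.erase α
  have hαE : α ∉ E := Finset.notMem_erase _ _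
  have hinsert : ∀ e ∈ insert α E, e ∈ runDval N σ \ (dvalM i ∪ dvalM f) := by
    rw [Finset.insert_erase (hfresh_fin.mem_toFinset.2 hα)]
    exact fun e => hfresh_fin.mem_toFinset.1
  have hkE : k ≤ E.card := by
    rw [Finset.card_erase_of_mem (hfresh_fin.mem_toFinset.2 hα),
      ← Set.ncard_eq_toFinset_card _ hfresh_fin]
    exact Nat.le_sub_one_of_lt hfresh
  have hEne : E.Nonempty := by
    obtain ⟨s, hs, x, hx, -⟩ := hα.1
    have : 0 < (varsOf N s.t).ncard := (Set.ncard_pos (Set.toFinite _)).2 ⟨x, hx⟩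
    exact Finset.card_pos.1 (this.trans_le ((hk s hs).trans hkE))
  obtain ⟨ρ, hρ, hρdval, hρreach⟩ :=
    hreach.exists_reaches_collapseCols hEne hαE hσ (fun s hs => (hk s hs).trans hkE) hi
  rw [Set.union_eq_self_of_subset_right fun e he => (hinsert e (Finset.mem_insert_of_mem he)).1]
    at hρdval
  rw [collapseCols_comp_eq_self fun e he h => (hinsert e he).2 (Or.inl h),
    collapseCols_comp_eq_self fun e he h => (hinsert e he).2 (Or.inr h)] at hρreach
  exact ⟨ρ, hρ, hρreach, hρdval.trans_ssubset (Set.sdiff_singleton_ssubset.2 hα.1)⟩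

end Spread

/-- If there is a ℚ⁺-run `σ` with `i →σ_{ℚ⁺} f` using more than
`|dval(i) ∪ dval(f)| + 1 + maxvars(N)` data values, then there is a ℚ⁺-run `ρ`
with `i →ρ_{ℚ⁺} f` and `|dval(ρ)| ≤ |dval(σ)| − 1`. -/
theorem qplus_reach_decrease
    (N : UDPN P T V) (i f : P → ℕ → ℚ)
    (hi : IsMarking true i) (hf : IsMarking true f)
    (σ : List (Step T V)) (hσ : IsRun σ) (hσr : Reaches true N i σ f)
    (hbig : (dvalM i ∪ dvalM f).ncard + 1 + maxvars N < (runDval N σ).ncard) :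
    ∃ ρ : List (Step T V), IsRun ρ ∧ Reaches true N i ρ f ∧
      (runDval N ρ).ncard ≤ (runDval N σ).ncard - 1 := by
  obtain ⟨ρ, hρ, hreach, hlt⟩ := qplus_reach_decrease_general N hi.1 hσ hσr
    (fun s _ => ncard_varsOf_le_maxvars N s.t) (by omega)
  exact ⟨ρ, hρ, hreach, Nat.le_sub_one_of_lt (Set.ncard_lt_ncard hlt (runDval_finite N σ))⟩
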